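/- With confidence at least 1 − 2δ over the draw of n domains P^{(1)},…,P^{(n)} i.i.d. from the proxy meta-distribution μ' and m i.i.d. samples from each domain, simultaneously for all f ∈ F: L^μ(f) ≤ L̂^{μ'}(f) + 2·R_{mn}(F) + 2·R_n(F) + 3·√(ln(2/δ)/(2mn)) + 3·√(ln(2/δ)/n) + ε, provided D(μ, μ') ≤ ε. -/

import Mathlib

open MeasureTheory Real Filter

noncomputable section

/-- The output space `Y = {1, -1}`, as a subtype of the integers. -/
abbrev Ysp : Type := ({1, -1} : Set ℤ)

/-- The risk `L_P(f) = E_{(x,y) ~ P}[ℓ(f(x), y)]` of a decision function `f`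
under a distribution `P` on `X × Y`. -/
def risk {X : Type*} [MeasurableSpace X] (ℓ : Ysp → Ysp → ℝ)
    (P : Measure (X × Ysp)) (f : X → Ysp) : ℝ :=
  ∫ p, ℓ (f p.1) p.2 ∂P

/-- The population risk `L^μ(f) = E_{P ~ μ}[L_P(f)]` under a meta-distribution `μ`. -/
def metaRisk {X : Type*} [MeasurableSpace X] (ℓ : Ysp → Ysp → ℝ)
    (μ : Measure (Measure (X × Ysp))) (f : X → Ysp) : ℝ :=
  ∫ P, risk ℓ P f ∂μ

/-- Interpret a boolean as a random sign in `{-1, +1}`. -/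
def sgn (b : Bool) : ℝ := if b then 1 else -1

/-- Empirical Rademacher complexity of the class `F` on the sample `S`:
the expectation, over i.i.d. uniform random signs `σ`, of
`sup_{f ∈ F} (1/N) ∑ₖ σₖ ℓ(f(xₖ), yₖ)` where `N` is the sample size. -/
def rad {X : Type*} [MeasurableSpace X] (ℓ : Ysp → Ysp → ℝ) (F : Set (X → Ysp))
    {ι : Type*} [Fintype ι] [DecidableEq ι] (S : ι → X × Ysp) : ℝ :=
  (∑ σ : ι → Bool, ⨆ f ∈ F,
      (Fintype.card ι : ℝ)⁻¹ * ∑ k, sgn (σ k) * ℓ (f (S k).1) (S k).2) /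
    2 ^ Fintype.card ι

/-- Domain-level Rademacher average of `F` on the domains `P 0, …, P (n-1)`:
the expectation, over i.i.d. uniform random signs `σ`, of
`sup_{f ∈ F} (1/n) ∑ⱼ σⱼ L_{P⁽ʲ⁾}(f)`. -/
def radDom {X : Type*} [MeasurableSpace X] (ℓ : Ysp → Ysp → ℝ) (F : Set (X → Ysp))
    {n : ℕ} (P : Fin n → Measure (X × Ysp)) : ℝ :=
  (∑ σ : Fin n → Bool, ⨆ f ∈ F,
      (n : ℝ)⁻¹ * ∑ j, sgn (σ j) * risk ℓ (P j) f) / 2 ^ n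

/-- The joint law of (the tuple of `n` i.i.d. domains drawn from a meta-distribution `μ`,
an `n × m` array of samples whose `j`-th row consists of `m` i.i.d. samples from
the `j`-th drawn domain). -/
def jointLaw {X : Type*} [MeasurableSpace X] (n m : ℕ)
    (μ : Measure (Measure (X × Ysp))) :
    Measure ((Fin n → Measure (X × Ysp)) × ((Fin n × Fin m) → X × Ysp)) :=
  (Measure.pi fun _ : Fin n => μ).bind fun P =>
    (Measure.pi fun p : Fin n × Fin m => P p.1).map fun s => (P, s)

section McD
variable {Z : Type*} [MeasurableSpace Z] {ι : Type*} [Fintype ι] [DecidableEq ι]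

lemma update_mp (ν : ι → Measure Z) [∀ i, IsProbabilityMeasure (ν i)] (k : ι) :
    MeasurePreserving (fun p : (ι → Z) × Z => Function.update p.1 k p.2)
      ((Measure.pi ν).prod (ν k)) (Measure.pi ν) := by
  have hm : Measurable (fun p : (ι → Z) × Z => Function.update p.1 k p.2) := by
    rw [measurable_pi_iff]
    intro i
    by_cases h : i = k
    · subst h; simpa using measurable_snd
    · simp only [Function.update_of_ne h]
      exact (measurable_pi_apply i).comp measurable_fst
  refine ⟨hm, ?_⟩
  symm
  apply Measure.pi_eq
  intro s hs
  rw [Measure.map_apply hm (MeasurableSet.univ_pi hs)]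
  have : (fun p : (ι → Z) × Z => Function.update p.1 k p.2) ⁻¹' (Set.univ.pi s)
      = (Set.univ.pi (Function.update s k Set.univ)) ×ˢ s k := by
    ext ⟨x, z⟩
    simp only [Set.mem_preimage, Set.mem_pi, Set.mem_univ, true_imp_iff, Set.mem_prod]
    constructor
    · intro h
      refine ⟨fun i => ?_, by simpa using h k⟩
      by_cases hi : i = k
      · subst hi; simp
      · simpa [hi] using h i
    · rintro ⟨h, hz⟩ i
      by_cases hi : i = k
      · subst hi; simpa using hz
      · simpa [hi] using h i
  rw [this, Measure.prod_prod, Measure.pi_pi]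
  rw [← Finset.prod_erase_mul _ _ (Finset.mem_univ k), ← Finset.prod_erase_mul _ _ (Finset.mem_univ k)]
  simp only [Function.update_self, measure_univ, mul_one]
  congr 1
  apply Finset.prod_congr rfl
  intro i hi
  rw [Function.update_of_ne (Finset.ne_of_mem_erase hi)]

lemma integrable_of_bdd {Ω : Type*} [MeasurableSpace Ω] (μ : Measure Ω) [IsFiniteMeasure μ]
    {f : Ω → ℝ} (hf : Measurable f) (B : ℝ) (hB : ∀ x, |f x| ≤ B) : Integrable f μ :=
  Integrable.of_bound hf.aestronglyMeasurable B (Eventually.of_forall hB)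

lemma integral_update (ν : ι → Measure Z) [∀ i, IsProbabilityMeasure (ν i)] (k : ι)
    {H : (ι → Z) → ℝ} (hH : Measurable H) (B : ℝ) (hB : ∀ x, |H x| ≤ B) :
    ∫ x, H x ∂(Measure.pi ν) = ∫ x, ∫ z, H (Function.update x k z) ∂(ν k) ∂(Measure.pi ν) := by
  have mp := update_mp ν k
  conv_lhs => rw [← mp.map_eq]
  rw [integral_map mp.measurable.aemeasurable hH.aestronglyMeasurable]
  exact integral_prod _ (integrable_of_bdd _ (hH.comp mp.measurable) B (fun x => hB _))

lemma const_of_indep [Nonempty Z] {H : (ι → Z) → ℝ}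
    (h : ∀ k x z, H (Function.update x k z) = H x) (x y : ι → Z) : H x = H y := by
  have : ∀ s : Finset ι, H (s.piecewise x y) = H y := by
    intro s
    induction s using Finset.induction_on with
    | empty => simp
    | insert k s hk ih => rw [Finset.piecewise_insert, h, ih]
  simpa using this Finset.univ

lemma mcd_aux [Nonempty Z] (ν : ι → Measure Z) [∀ i, IsProbabilityMeasure (ν i)] (c : ℝ) (hc : 0 ≤ c)
    (t : ℝ) (s : Finset ι) : ∀ (H : (ι → Z) → ℝ) (_ : Measurable H) (B : ℝ) (_ : ∀ x, |H x| ≤ B)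
    (_ : ∀ k x z z', H (Function.update x k z) ≤ H (Function.update x k z') + c)
    (_ : ∀ k ∉ s, ∀ x z, H (Function.update x k z) = H x),
    ∫ x, exp (t * (H x - ∫ y, H y ∂(Measure.pi ν))) ∂(Measure.pi ν)
      ≤ exp (s.card * (c ^ 2 / 4) * t ^ 2 / 2) := by
  induction s using Finset.induction_on with
  | empty =>
    intro H hH B hB hd hi
    have hcst := const_of_indep (fun k => hi k (by simp))
    obtain ⟨z⟩ := ‹Nonempty Z›
    have : H = fun _ => H (fun _ => z) := funext fun x => hcst x _
    rw [this]
    simp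
  | insert k s hk ih =>
    intro H hH B hB hd hi
    set E := ∫ y, H y ∂(Measure.pi ν) with hE
    have mp := update_mp ν k
    have hHu : Measurable (fun p : (ι → Z) × Z => H (Function.update p.1 k p.2)) :=
      hH.comp mp.measurable
    set H' : (ι → Z) → ℝ := fun x => ∫ z, H (Function.update x k z) ∂(ν k) with hH'
    have hm' : Measurable H' := by
      exact (StronglyMeasurable.integral_prod_right (ν := ν k) hHu.stronglyMeasurable).measurable
    have hsec : ∀ x, Measurable (fun z => H (Function.update x k z)) := fun x =>
      hHu.comp measurable_prodMk_left
    have hint : ∀ x, Integrable (fun z => H (Function.update x k z)) (ν k) := fun x =>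
      integrable_of_bdd _ (hsec x) B (fun z => hB _)
    have hB' : ∀ x, |H' x| ≤ B := by
      intro x
      have := norm_integral_le_of_norm_le_const (μ := ν k) (f := fun z => H (Function.update x k z))
        (C := B) (Eventually.of_forall fun z => hB _)
      simpa using this
    have hB0 : 0 ≤ B := by
      obtain ⟨z⟩ := ‹Nonempty Z›
      exact (abs_nonneg _).trans (hB (fun _ => z))
    have hE' : E = ∫ x, H' x ∂(Measure.pi ν) := integral_update ν k hH B hB
    have hEB : |E| ≤ B := by
      have := norm_integral_le_of_norm_le_const (μ := Measure.pi ν) (f := H)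
        (C := B) (Eventually.of_forall fun z => hB _)
      simpa using this
    have hd' : ∀ j x z z', H' (Function.update x j z) ≤ H' (Function.update x j z') + c := by
      intro j x z z'
      by_cases hj : j = k
      · subst hj; simp [hH', hc]
      · simp only [hH']
        have : ∫ w, H (Function.update (Function.update x j z') k w) ∂(ν k) + c
          = ∫ w, (H (Function.update (Function.update x j z') k w) + c) ∂(ν k) := by
          rw [integral_add (hint _) (integrable_const _)]; simp
        rw [this]
        apply integral_mono (hint _) ((hint _).add (integrable_const _))
        intro w
        simp only [Function.update_comm hj]
        exact hd _ _ _ _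
    have hi' : ∀ j ∉ s, ∀ x z, H' (Function.update x j z) = H' x := by
      intro j hj x z
      by_cases hjk : j = k
      · subst hjk; simp [hH']
      · simp only [hH', Function.update_comm hjk]
        congr 1; ext w
        exact hi j (by simp [hjk, hj]) _ _
    have key := ih H' hm' B hB' hd' hi'
    rw [← hE'] at key
    have hexpB : ∀ G : (ι → Z) → ℝ, (∀ x, |G x| ≤ B) → ∀ x, |exp (t * (G x - E))| ≤ exp (|t| * (2 * B)) := by
      intro G hG x
      rw [abs_of_pos (exp_pos _)]
      apply exp_le_exp.2
      calc t * (G x - E) ≤ |t * (G x - E)| := le_abs_self _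
        _ = |t| * |G x - E| := abs_mul _ _
        _ ≤ |t| * (2 * B) := by
          gcongr
          have := abs_sub (G x) E
          linarith [hG x]
    have hmexp : ∀ G : (ι → Z) → ℝ, Measurable G → Measurable fun x => exp (t * (G x - E)) := by
      intro G hG
      fun_prop
    rw [integral_update ν k (hmexp H hH) _ (hexpB H hB)]
    have hstep : ∀ x, ∫ z, exp (t * (H (Function.update x k z) - E)) ∂(ν k)
        ≤ exp ((c ^ 2 / 4) * t ^ 2 / 2) * exp (t * (H' x - E)) := by
      intro x
      have hbdd : BddBelow (Set.range fun z => H (Function.update x k z)) := by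
        refine ⟨-B, ?_⟩
        rintro _ ⟨z, rfl⟩
        exact (abs_le.1 (hB _)).1
      have hsg := ProbabilityTheory.hasSubgaussianMGF_of_mem_Icc (μ := ν k)
        (X := fun z => H (Function.update x k z)) (a := ⨅ z, H (Function.update x k z))
        (b := (⨅ z, H (Function.update x k z)) + c) (hsec x).aemeasurable
        (Eventually.of_forall fun z => ⟨ciInf_le hbdd z, by
          rw [← sub_le_iff_le_add]
          exact le_ciInf fun z' => by linarith [hd k x z z']⟩)
      have h2 := hsg.mgf_le t
      have hfac : ∀ z, exp (t * (H (Function.update x k z) - E)) =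
          exp (t * (H (Function.update x k z) - H' x)) * exp (t * (H' x - E)) := by
        intro z; rw [← exp_add]; congr 1; ring
      simp_rw [hfac]
      rw [integral_mul_const]
      apply mul_le_mul_of_nonneg_right _ (exp_pos _).le
      refine h2.trans (le_of_eq ?_)
      congr 3
      simp [abs_of_nonneg hc]
      ring
    calc _ ≤ ∫ x, exp ((c ^ 2 / 4) * t ^ 2 / 2) * exp (t * (H' x - E)) ∂(Measure.pi ν) := by
          apply integral_mono _ ((integrable_of_bdd _ (hmexp H' hm') _ (hexpB H' hB')).const_mul _) hstep
          refine integrable_of_bdd _ ?_ (exp (|t| * (2 * B))) ?_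
          · have hmm : Measurable (fun p : (ι → Z) × Z => exp (t * (H (Function.update p.1 k p.2) - E))) :=
              (hmexp H hH).comp mp.measurable
            exact (StronglyMeasurable.integral_prod_right (ν := ν k) hmm.stronglyMeasurable).measurable
          · intro x
            have := norm_integral_le_of_norm_le_const (μ := ν k)
              (f := fun z => exp (t * (H (Function.update x k z) - E)))
              (C := exp (|t| * (2 * B))) (Eventually.of_forall fun z => hexpB H hB _)
            simpa using this
      _ = exp ((c ^ 2 / 4) * t ^ 2 / 2) * ∫ x, exp (t * (H' x - E)) ∂(Measure.pi ν) := by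
          rw [integral_const_mul]
      _ ≤ exp ((c ^ 2 / 4) * t ^ 2 / 2) * exp (s.card * (c ^ 2 / 4) * t ^ 2 / 2) := by gcongr
      _ = _ := by
          rw [← exp_add, Finset.card_insert_of_notMem hk]
          push_cast
          congr 1; ring

lemma mcdiarmid [Nonempty Z] (ν : ι → Measure Z) [∀ i, IsProbabilityMeasure (ν i)] (c : ℝ) (hc : 0 ≤ c)
    (H : (ι → Z) → ℝ) (hH : Measurable H) (B : ℝ) (hB : ∀ x, |H x| ≤ B)
    (hd : ∀ k x z z', H (Function.update x k z) ≤ H (Function.update x k z') + c)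
    (a : ℝ) (ha : 0 ≤ a) :
    (Measure.pi ν).real {x | a ≤ H x - ∫ y, H y ∂(Measure.pi ν)}
      ≤ exp (- a ^ 2 / (2 * (Fintype.card ι * (c ^ 2 / 4)))) := by
  have hsg : ProbabilityTheory.HasSubgaussianMGF (fun x => H x - ∫ y, H y ∂(Measure.pi ν))
      (⟨Fintype.card ι * (c ^ 2 / 4), by positivity⟩ : NNReal) (Measure.pi ν) := by
    constructor
    · intro t
      have hEB : |∫ y, H y ∂(Measure.pi ν)| ≤ B := by
        have := norm_integral_le_of_norm_le_const (μ := Measure.pi ν) (f := H)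
          (C := B) (Eventually.of_forall fun z => hB _)
        simpa using this
      refine integrable_of_bdd _ (by fun_prop) (exp (|t| * (2 * B))) ?_
      intro x
      rw [abs_of_pos (exp_pos _)]
      apply exp_le_exp.2
      refine (le_abs_self _).trans ?_
      rw [abs_mul]
      gcongr
      have := abs_sub (H x) (∫ y, H y ∂(Measure.pi ν))
      linarith [hB x]
    · intro t
      exact mcd_aux ν c hc t Finset.univ H hH B hB hd (by simp)
  exact hsg.measure_ge_le ha
end McD
open scoped ProbabilityTheory
section Rad
set_option linter.unusedSectionVars false
variable {Z : Type*} {ι : Type*} [Fintype ι] [DecidableEq ι] {I : Type*}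

def aT (u : I → Z → ℝ) (σ : ι → Bool) (s : ι → Z) : ℝ :=
  ⨆ i, (Fintype.card ι : ℝ)⁻¹ * ∑ k, sgn (σ k) * u i (s k)

def aRad (u : I → Z → ℝ) (s : ι → Z) : ℝ :=
  (∑ σ : ι → Bool, aT u σ s) / 2 ^ Fintype.card ι

def aDev (u : I → Z → ℝ) (e : I → ι → ℝ) (s : ι → Z) : ℝ :=
  ⨆ i, (Fintype.card ι : ℝ)⁻¹ * ∑ k, (e i k - u i (s k))

def aD (u : I → Z → ℝ) (σ : ι → Bool) (p : (ι → Z) × (ι → Z)) : ℝ :=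
  ⨆ i, (Fintype.card ι : ℝ)⁻¹ * ∑ k, sgn (σ k) * (u i (p.2 k) - u i (p.1 k))

lemma sgn_abs (b : Bool) : |sgn b| = 1 := by cases b <;> simp [sgn]

lemma sgn_not (b : Bool) : sgn (!b) = - sgn b := by cases b <;> simp [sgn]

lemma avg_abs_le (φ : ι → ℝ) (h : ∀ k, |φ k| ≤ 1) :
    |(Fintype.card ι : ℝ)⁻¹ * ∑ k, φ k| ≤ 1 := by
  rw [abs_mul, abs_of_nonneg (by positivity : (0:ℝ) ≤ (Fintype.card ι : ℝ)⁻¹)]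
  have h1 : |∑ k, φ k| ≤ Fintype.card ι := by
    refine (Finset.abs_sum_le_sum_abs _ _).trans ?_
    refine (Finset.sum_le_sum fun k _ => h k).trans ?_
    simp
  calc _ ≤ (Fintype.card ι : ℝ)⁻¹ * (Fintype.card ι : ℝ) := by gcongr
    _ ≤ 1 := inv_mul_le_one

lemma bddAbove_of_abs {f : I → ℝ} (h : ∀ i, |f i| ≤ 1) : BddAbove (Set.range f) :=
  ⟨1, by rintro _ ⟨i, rfl⟩; exact (abs_le.1 (h i)).2⟩

lemma sup_abs_le [Nonempty I] {f : I → ℝ} (h : ∀ i, |f i| ≤ 1) : |⨆ i, f i| ≤ 1 := by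
  rw [abs_le]
  obtain ⟨i⟩ := ‹Nonempty I›
  exact ⟨(abs_le.1 (h i)).1.trans (le_ciSup (bddAbove_of_abs h) i),
    haveI : Nonempty I := ⟨i⟩
    ciSup_le fun i => (abs_le.1 (h i)).2⟩

lemma sup_le_sup_add [Nonempty I] {f g : I → ℝ} {c : ℝ} (hg : ∀ i, |g i| ≤ 1)
    (h : ∀ i, f i ≤ g i + c) : ⨆ i, f i ≤ (⨆ i, g i) + c :=
  ciSup_le fun i => (h i).trans (by linarith [le_ciSup (bddAbove_of_abs hg) i])

lemma avg_update (φ : ι → Z → ℝ) (k : ι) (x : ι → Z) (z z' : Z) (h : φ k z ≤ φ k z' + 1) :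
    (Fintype.card ι : ℝ)⁻¹ * ∑ j, φ j (Function.update x k z j) ≤
    (Fintype.card ι : ℝ)⁻¹ * ∑ j, φ j (Function.update x k z' j) + (Fintype.card ι : ℝ)⁻¹ := by
  have : ∑ j, φ j (Function.update x k z j) ≤ ∑ j, φ j (Function.update x k z' j) + 1 := by
    rw [← Finset.add_sum_erase _ _ (Finset.mem_univ k), ← Finset.add_sum_erase _ _ (Finset.mem_univ k)]
    have : ∀ w, ∑ j ∈ Finset.univ.erase k, φ j (Function.update x k w j)
        = ∑ j ∈ Finset.univ.erase k, φ j (x j) := by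
      intro w
      apply Finset.sum_congr rfl
      intro j hj
      rw [Function.update_of_ne (Finset.ne_of_mem_erase hj)]
    rw [this, this]
    simp only [Function.update_self]
    linarith
  have h0 : (0:ℝ) ≤ (Fintype.card ι : ℝ)⁻¹ := by positivity
  nlinarith [mul_le_mul_of_nonneg_left this h0]

variable (u : I → Z → ℝ)

lemma term_abs (hu : ∀ i z, u i z ∈ Set.Icc (0:ℝ) 1) (σ : ι → Bool) (s : ι → Z) (i : I) (k : ι) : |sgn (σ k) * u i (s k)| ≤ 1 := by
  rw [abs_mul, sgn_abs, one_mul, abs_of_nonneg (hu _ _).1]; exact (hu _ _).2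

lemma termD_abs (hu : ∀ i z, u i z ∈ Set.Icc (0:ℝ) 1) (σ : ι → Bool) (s s' : ι → Z) (i : I) (k : ι) :
    |sgn (σ k) * (u i (s' k) - u i (s k))| ≤ 1 := by
  rw [abs_mul, sgn_abs, one_mul, abs_le]
  constructor <;> linarith [(hu i (s k)).1, (hu i (s k)).2, (hu i (s' k)).1, (hu i (s' k)).2]

lemma termDev_abs (hu : ∀ i z, u i z ∈ Set.Icc (0:ℝ) 1) (e : I → ι → ℝ) (he : ∀ i k, e i k ∈ Set.Icc (0:ℝ) 1) (s : ι → Z) (i : I) (k : ι) :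
    |e i k - u i (s k)| ≤ 1 := by
  rw [abs_le]
  constructor <;> linarith [(hu i (s k)).1, (hu i (s k)).2, (he i k).1, (he i k).2]

lemma aT_abs (hu : ∀ i z, u i z ∈ Set.Icc (0:ℝ) 1) [Nonempty I] (σ : ι → Bool) (s : ι → Z) : |aT u σ s| ≤ 1 :=
  sup_abs_le fun i => avg_abs_le _ fun k => term_abs u hu σ s i k

lemma aD_abs (hu : ∀ i z, u i z ∈ Set.Icc (0:ℝ) 1) [Nonempty I] (σ : ι → Bool) (p : (ι → Z) × (ι → Z)) : |aD u σ p| ≤ 1 :=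
  sup_abs_le fun i => avg_abs_le _ fun k => termD_abs u hu σ p.1 p.2 i k

lemma aDev_abs (hu : ∀ i z, u i z ∈ Set.Icc (0:ℝ) 1) [Nonempty I] (e : I → ι → ℝ) (he : ∀ i k, e i k ∈ Set.Icc (0:ℝ) 1) (s : ι → Z) :
    |aDev u e s| ≤ 1 :=
  sup_abs_le fun i => avg_abs_le _ fun k => termDev_abs u hu e he s i k

lemma card_sign : (Finset.univ : Finset (ι → Bool)).card = 2 ^ Fintype.card ι := by
  simp

lemma aRad_abs (hu : ∀ i z, u i z ∈ Set.Icc (0:ℝ) 1) [Nonempty I] (s : ι → Z) : |aRad u s| ≤ 1 := by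
  unfold aRad
  rw [abs_div, abs_of_pos (by positivity : (0:ℝ) < 2 ^ Fintype.card ι), div_le_one (by positivity)]
  refine (Finset.abs_sum_le_sum_abs _ _).trans ?_
  refine (Finset.sum_le_sum fun σ _ => aT_abs u hu σ s).trans ?_
  simp

lemma aT_update (hu : ∀ i z, u i z ∈ Set.Icc (0:ℝ) 1) [Nonempty I] (σ : ι → Bool) (k : ι) (x : ι → Z) (z z' : Z) :
    aT u σ (Function.update x k z) ≤ aT u σ (Function.update x k z') + (Fintype.card ι : ℝ)⁻¹ := by
  refine sup_le_sup_add (fun i => avg_abs_le _ fun k => term_abs u hu σ _ i k) fun i => ?_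
  apply avg_update (fun j z => sgn (σ j) * u i z)
  have h1 := hu i z
  have h2 := hu i z'
  simp only [Set.mem_Icc] at h1 h2
  cases hb : σ k <;> simp [sgn] <;> linarith

lemma aDev_update (hu : ∀ i z, u i z ∈ Set.Icc (0:ℝ) 1) [Nonempty I] (e : I → ι → ℝ) (he : ∀ i k, e i k ∈ Set.Icc (0:ℝ) 1)
    (k : ι) (x : ι → Z) (z z' : Z) :
    aDev u e (Function.update x k z) ≤ aDev u e (Function.update x k z') + (Fintype.card ι : ℝ)⁻¹ := by
  refine sup_le_sup_add (fun i => avg_abs_le _ fun k => termDev_abs u hu e he _ i k) fun i => ?_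
  apply avg_update (fun j z => e i j - u i z)
  linarith [(hu i z).1, (hu i z').2]

lemma aRad_update (hu : ∀ i z, u i z ∈ Set.Icc (0:ℝ) 1) [Nonempty I] (k : ι) (x : ι → Z) (z z' : Z) :
    aRad u (Function.update x k z) ≤ aRad u (Function.update x k z') + (Fintype.card ι : ℝ)⁻¹ := by
  unfold aRad
  rw [div_add' _ _ _ (by positivity)]
  apply div_le_div_of_nonneg_right _ (by positivity)
  refine (Finset.sum_le_sum fun σ _ => aT_update u hu σ k x z z').trans (le_of_eq ?_)
  rw [Finset.sum_add_distrib]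
  simp [mul_comm]

variable [MeasurableSpace Z]

lemma aT_meas [Countable I] (hm : ∀ i, Measurable (u i)) (σ : ι → Bool) : Measurable (aT u σ) := by
  apply Measurable.iSup
  intro i
  have := hm i
  fun_prop

lemma aD_meas [Countable I] (hm : ∀ i, Measurable (u i)) (σ : ι → Bool) : Measurable (aD u σ) := by
  apply Measurable.iSup
  intro i
  have := hm i
  fun_prop

lemma aDev_meas [Countable I] (hm : ∀ i, Measurable (u i)) (e : I → ι → ℝ) : Measurable (aDev u e) := by
  apply Measurable.iSup
  intro i
  have := hm i
  fun_prop

lemma aRad_meas [Countable I] (hm : ∀ i, Measurable (u i)) : Measurable (aRad (ι := ι) u) := by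
  unfold aRad
  apply Measurable.div_const
  exact Finset.measurable_sum _ fun σ _ => aT_meas u hm σ

lemma aD_swap (ν : ι → Measure Z) [∀ i, IsProbabilityMeasure (ν i)] [Countable I]
    (hm : ∀ i, Measurable (u i)) (σ : ι → Bool) :
    ∫ p, aD u (fun _ => true) p ∂((Measure.pi ν).prod (Measure.pi ν)) =
    ∫ p, aD u σ p ∂((Measure.pi ν).prod (Measure.pi ν)) := by
  have mp1 := measurePreserving_arrowProdEquivProdArrow Z Z ι ν ν
  have mp2 := measurePreserving_pi (fun k => (ν k).prod (ν k)) (fun k => (ν k).prod (ν k))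
    (f := fun k => if σ k then id else Prod.swap) (by
      intro k
      cases σ k
      · simpa using Measure.measurePreserving_swap
      · simpa using MeasurePreserving.id _)
  rw [← mp1.map_eq]
  rw [integral_map mp1.measurable.aemeasurable (aD_meas u hm _).aestronglyMeasurable,
    integral_map mp1.measurable.aemeasurable (aD_meas u hm _).aestronglyMeasurable]
  conv_lhs => rw [← mp2.map_eq]
  have hcm : Measurable (fun w : ι → Z × Z => aD u (fun _ => true)
      (MeasurableEquiv.arrowProdEquivProdArrow Z Z ι w)) := (aD_meas u hm _).comp mp1.measurable
  rw [integral_map mp2.measurable.aemeasurable hcm.aestronglyMeasurable]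
  congr 1
  ext w
  unfold aD
  congr 1
  ext i
  congr 1
  apply Finset.sum_congr rfl
  intro k _
  cases hb : σ k <;>
    simp [sgn, MeasurableEquiv.arrowProdEquivProdArrow, Equiv.arrowProdEquivProdArrow, hb]

lemma aD_le (hu : ∀ i z, u i z ∈ Set.Icc (0:ℝ) 1) [Nonempty I] (σ : ι → Bool) (p : (ι → Z) × (ι → Z)) :
    aD u σ p ≤ aT u σ p.2 + aT u (fun k => !σ k) p.1 := by
  apply ciSup_le
  intro i
  have h1 := le_ciSup (bddAbove_of_abs fun i => avg_abs_le _ fun k => term_abs u hu σ p.2 i k) i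
  have h2 := le_ciSup (bddAbove_of_abs fun i => avg_abs_le _ fun k =>
    term_abs u hu (fun k => !σ k) p.1 i k) i
  unfold aT
  refine le_trans (le_of_eq ?_) (add_le_add h1 h2)
  simp only [sgn_not]
  rw [← mul_add, ← Finset.sum_add_distrib]
  congr 1
  apply Finset.sum_congr rfl
  intro k _
  ring

lemma symm_le (hu : ∀ i z, u i z ∈ Set.Icc (0:ℝ) 1) [Nonempty I] [Countable I] (ν : ι → Measure Z) [∀ i, IsProbabilityMeasure (ν i)]
    (hm : ∀ i, Measurable (u i)) :
    ∫ s, aDev u (fun i k => ∫ z, u i z ∂(ν k)) s ∂(Measure.pi ν) ≤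
      2 * ∫ s, aRad u s ∂(Measure.pi ν) := by
  set e : I → ι → ℝ := fun i k => ∫ z, u i z ∂(ν k) with hedef
  have hui : ∀ i k, Integrable (u i) (ν k) := fun i k =>
    integrable_of_bdd _ (hm i) 1 fun z => by rw [abs_of_nonneg (hu i z).1]; exact (hu i z).2
  have he : ∀ i k, e i k ∈ Set.Icc (0:ℝ) 1 := by
    intro i k
    refine ⟨integral_nonneg fun z => (hu i z).1, ?_⟩
    have := integral_mono (hui i k) (integrable_const 1) fun z => (hu i z).2
    simpa using this
  set pm := Measure.pi ν with hpm
  have hDint : Integrable (aD u (fun _ : ι => true)) (pm.prod pm) :=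
    integrable_of_bdd _ (aD_meas u hm _) 1 (aD_abs u hu _)
  have hTint : ∀ σ : ι → Bool, Integrable (aT u σ) pm := fun σ =>
    integrable_of_bdd _ (aT_meas u hm σ) 1 (aT_abs u hu σ)
  have h1 : ∀ s, aDev u e s ≤ ∫ s', aD u (fun _ => true) (s, s') ∂pm := by
    intro s
    apply ciSup_le
    intro i
    have hev : ∀ k, ∫ s' : ι → Z, u i (s' k) ∂pm = e i k := by
      intro k
      have mp := measurePreserving_eval ν k
      rw [hedef]
      simp only
      rw [← mp.map_eq, integral_map mp.measurable.aemeasurable (hm i).aestronglyMeasurable]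
    have hevi : ∀ k, Integrable (fun s' : ι → Z => u i (s' k)) pm := fun k =>
      integrable_of_bdd _ ((hm i).comp (measurable_pi_apply k)) 1 fun z => by
        rw [abs_of_nonneg (hu i _).1]; exact (hu i _).2
    have hsumi : Integrable (fun s' : ι → Z => (Fintype.card ι : ℝ)⁻¹ *
        ∑ k, (u i (s' k) - u i (s k))) pm :=
      (integrable_finsetSum _ fun k _ => (hevi k).sub (integrable_const _)).const_mul _
    have heq : (Fintype.card ι : ℝ)⁻¹ * ∑ k, (e i k - u i (s k)) =
        ∫ s' : ι → Z, (Fintype.card ι : ℝ)⁻¹ * ∑ k, (u i (s' k) - u i (s k)) ∂pm := by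
      have hsub : ∀ k ∈ Finset.univ, Integrable (fun s' : ι → Z => u i (s' k) - u i (s k)) pm :=
        fun k _ => (hevi k).sub (integrable_const _)
      rw [integral_const_mul, integral_finsetSum _ hsub]
      congr 1
      apply Finset.sum_congr rfl
      intro k _
      rw [integral_sub (hevi k) (integrable_const _), hev]
      simp
    rw [heq]
    apply integral_mono hsumi
    · exact integrable_of_bdd _ ((aD_meas u hm _).comp measurable_prodMk_left) 1
        fun s' => aD_abs u hu _ _
    · intro s'
      have := le_ciSup (bddAbove_of_abs fun i => avg_abs_le _ fun k =>
        termD_abs u hu (fun _ => true) s s' i k) i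
      refine le_trans (le_of_eq ?_) this
      simp [sgn]
  have h2 : ∫ s, aDev u e s ∂pm ≤ ∫ p, aD u (fun _ => true) p ∂(pm.prod pm) := by
    rw [integral_prod _ hDint]
    exact integral_mono (integrable_of_bdd _ (aDev_meas u hm e) 1 (aDev_abs u hu e he))
      hDint.integral_prod_left h1
  have h3 : ∀ σ : ι → Bool, ∫ s, aDev u e s ∂pm ≤
      ∫ s, aT u σ s ∂pm + ∫ s, aT u (fun k => !σ k) s ∂pm := by
    intro σ
    refine h2.trans ?_
    rw [aD_swap u ν hm σ]
    have i1 : Integrable (fun p : (ι → Z) × (ι → Z) => aT u σ p.2) (pm.prod pm) :=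
      (hTint σ).comp_snd pm
    have i2 : Integrable (fun p : (ι → Z) × (ι → Z) => aT u (fun k => !σ k) p.1) (pm.prod pm) :=
      (hTint _).comp_fst pm
    calc _ ≤ ∫ p : (ι → Z) × (ι → Z), (aT u σ p.2 + aT u (fun k => !σ k) p.1) ∂(pm.prod pm) :=
          integral_mono (integrable_of_bdd _ (aD_meas u hm _) 1 (aD_abs u hu _)) (i1.add i2)
            (aD_le u hu σ)
      _ = _ := by
          rw [integral_add i1 i2, integral_fun_snd (fun s => aT u σ s),
            integral_fun_fst (fun s => aT u (fun k => !σ k) s)]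
          simp
  have h4 := Finset.sum_le_sum fun (σ : ι → Bool) (_ : σ ∈ Finset.univ) => h3 σ
  rw [Finset.sum_add_distrib] at h4
  have h5 : ∑ σ : ι → Bool, ∫ s, aT u (fun k => !σ k) s ∂pm = ∑ σ : ι → Bool, ∫ s, aT u σ s ∂pm := by
    apply Finset.sum_bijective (fun (σ : ι → Bool) k => !σ k)
    · apply Function.Involutive.bijective
      intro σ; ext k; simp
    · simp
    · simp
  rw [h5] at h4
  simp only [Finset.sum_const, nsmul_eq_mul, card_sign] at h4
  push_cast at h4
  unfold aRad
  rw [integral_div, integral_finsetSum _ fun σ _ => hTint σ]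
  rw [← mul_div_assoc, le_div_iff₀ (by positivity)]
  linarith

lemma rad_tail (hu : ∀ i z, u i z ∈ Set.Icc (0:ℝ) 1) [Nonempty I] [Countable I] [Nonempty ι] [Nonempty Z]
    (ν : ι → Measure Z) [∀ i, IsProbabilityMeasure (ν i)]
    (hm : ∀ i, Measurable (u i)) (L : ℝ) (hL : 0 ≤ L) :
    (Measure.pi ν) {s | 3 * √(L / (2 * Fintype.card ι)) ≤
      aDev u (fun i k => ∫ z, u i z ∂(ν k)) s - 2 * aRad u s} ≤ ENNReal.ofReal (exp (- L)) := by
  set e : I → ι → ℝ := fun i k => ∫ z, u i z ∂(ν k) with hedef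
  have hui : ∀ i k, Integrable (u i) (ν k) := fun i k =>
    integrable_of_bdd _ (hm i) 1 fun z => by rw [abs_of_nonneg (hu i z).1]; exact (hu i z).2
  have he : ∀ i k, e i k ∈ Set.Icc (0:ℝ) 1 := by
    intro i k
    refine ⟨integral_nonneg fun z => (hu i z).1, ?_⟩
    have := integral_mono (hui i k) (integrable_const 1) fun z => (hu i z).2
    simpa using this
  have hDm := aDev_meas u hm e
  have hRm := aRad_meas (ι := ι) u hm
  have hN : (0:ℝ) < Fintype.card ι := by exact_mod_cast Fintype.card_pos
  have key := mcdiarmid ν (3 * (Fintype.card ι : ℝ)⁻¹) (by positivity)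
    (fun s => aDev u e s - 2 * aRad u s) (by fun_prop) 3
    (fun s => by
      have h1 := abs_le.1 (aDev_abs u hu e he s)
      have h2 := abs_le.1 (aRad_abs u hu s)
      rw [abs_le]; constructor <;> linarith)
    (fun k x z z' => by
      have h1 := aDev_update u hu e he k x z z'
      have h2 := aRad_update u hu k x z' z
      linarith) (3 * √(L / (2 * Fintype.card ι))) (by positivity)
  have hneg : ∫ s, (aDev u e s - 2 * aRad u s) ∂(Measure.pi ν) ≤ 0 := by
    rw [integral_sub, integral_const_mul]
    · linarith [symm_le u hu ν hm]
    · exact integrable_of_bdd _ hDm 1 (aDev_abs u hu e he)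
    · exact (integrable_of_bdd _ hRm 1 (aRad_abs u hu)).const_mul _
  have hexp : -(3 * √(L / (2 * Fintype.card ι))) ^ 2 /
      (2 * (Fintype.card ι * ((3 * (Fintype.card ι : ℝ)⁻¹) ^ 2 / 4))) = - L := by
    rw [mul_pow, Real.sq_sqrt (by positivity)]
    field_simp
    try norm_num
  rw [hexp] at key
  calc _ ≤ (Measure.pi ν) {s | 3 * √(L / (2 * Fintype.card ι)) ≤ aDev u e s - 2 * aRad u s -
        ∫ s, (aDev u e s - 2 * aRad u s) ∂(Measure.pi ν)} := by
        apply measure_mono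
        intro s hs
        simp only [Set.mem_ofPred_eq] at hs ⊢
        linarith
    _ ≤ _ := by
        rw [← ofReal_measureReal]
        exact ENNReal.ofReal_le_ofReal key

lemma rad_tail' (hu : ∀ i z, u i z ∈ Set.Icc (0:ℝ) 1) [Nonempty I] [Countable I] [Nonempty ι] [Nonempty Z]
    (ν : ι → Measure Z) [∀ i, IsProbabilityMeasure (ν i)]
    (hm : ∀ i, Measurable (u i)) (L : ℝ) (hL : 0 ≤ L) :
    ENNReal.ofReal (1 - exp (- L)) ≤ (Measure.pi ν) {s |
      aDev u (fun i k => ∫ z, u i z ∂(ν k)) s - 2 * aRad u s < 3 * √(L / (2 * Fintype.card ι))} := by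
  have hDm := aDev_meas u hm (fun (i : I) (k : ι) => ∫ z, u i z ∂(ν k))
  have hRm := aRad_meas (ι := ι) u hm
  have hms : MeasurableSet {s | 3 * √(L / (2 * Fintype.card ι)) ≤
      aDev u (fun i k => ∫ z, u i z ∂(ν k)) s - 2 * aRad u s} :=
    measurableSet_le measurable_const (by fun_prop)
  have h1 := prob_compl_eq_one_sub (μ := Measure.pi ν) hms
  have h2 := rad_tail u hu ν hm L hL
  have h3 : {s | 3 * √(L / (2 * Fintype.card ι)) ≤
      aDev u (fun i k => ∫ z, u i z ∂(ν k)) s - 2 * aRad u s}ᶜ = {s |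
      aDev u (fun i k => ∫ z, u i z ∂(ν k)) s - 2 * aRad u s < 3 * √(L / (2 * Fintype.card ι))} := by
    ext s; simp
  rw [← h3, h1, ENNReal.ofReal_sub _ (exp_pos _).le, ENNReal.ofReal_one]
  exact tsub_le_tsub_left h2 1
end Rad

lemma sup_le_bisup {α : Type*} (F : Set α) [Nonempty F] (g : α → ℝ) (h : ∀ f ∈ F, |g f| ≤ 1) :
    ⨆ i : F, g i ≤ ⨆ f ∈ F, g f := by
  have hb : BddAbove (Set.range fun f => ⨆ _ : f ∈ F, g f) := by
    refine ⟨1, ?_⟩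
    rintro _ ⟨f, rfl⟩
    by_cases hf : f ∈ F
    · simpa [hf] using (abs_le.1 (h f hf)).2
    · simp [hf]
  apply ciSup_le
  intro i
  refine le_trans (le_of_eq ?_) (le_ciSup hb (i : α))
  simp

lemma joint_aem {W : Type*} [MeasurableSpace W] [Nonempty W] (n m : ℕ)
    (μ : Measure (Measure W)) [IsProbabilityMeasure μ] (hμ : ∀ᵐ P ∂μ, IsProbabilityMeasure P) :
    (∀ᵐ P ∂(Measure.pi fun _ : Fin n => μ), ∀ j, IsProbabilityMeasure (P j)) ∧
    AEMeasurable (fun P : Fin n → Measure W =>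
      (Measure.pi fun p : Fin n × Fin m => P p.1).map fun s => (P, s))
      (Measure.pi fun _ : Fin n => μ) := by
  classical
  have hae : ∀ᵐ P ∂(Measure.pi fun _ : Fin n => μ), ∀ j, IsProbabilityMeasure (P j) := by
    rw [ae_all_iff]
    intro j
    exact (measurePreserving_eval (fun _ : Fin n => μ) j).quasiMeasurePreserving.ae hμ
  refine ⟨hae, ?_⟩
  obtain ⟨w⟩ := ‹Nonempty W›
  let Q : Measure W → Measure W := fun P => if P Set.univ = 1 then P else Measure.dirac w
  have hQm : Measurable Q := by
    apply Measurable.ite _ measurable_id measurable_const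
    exact (Measure.measurable_coe MeasurableSet.univ) (measurableSet_singleton 1)
  have hQp : ∀ P, IsProbabilityMeasure (Q P) := by
    intro P
    by_cases h : P Set.univ = 1
    · simp only [Q, h, if_true]; exact ⟨h⟩
    · simp only [Q, h, if_false]; infer_instance
  let κ : (Fin n → Measure W) → Measure ((Fin n × Fin m) → W) :=
    fun P => Measure.pi fun p => Q (P p.1)
  have hκp : ∀ P, IsProbabilityMeasure (κ P) := fun P => by simp only [κ]; infer_instance
  have hκ : Measurable κ := by
    apply Measurable.measure_of_isPiSystem_of_isProbabilityMeasure generateFrom_pi.symm isPiSystem_pi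
    rintro _ ⟨s, hs, rfl⟩
    simp only [κ, Measure.pi_pi]
    apply Finset.measurable_prod
    intro p _
    have hsp : MeasurableSet (s p) := by simpa using hs p (Set.mem_univ p)
    exact (Measure.measurable_coe hsp).comp (hQm.comp (measurable_pi_apply p.1))
  let K : ProbabilityTheory.Kernel (Fin n → Measure W) ((Fin n × Fin m) → W) := ⟨κ, hκ⟩
  haveI : ProbabilityTheory.IsMarkovKernel K := ⟨hκp⟩
  refine ⟨fun P => (ProbabilityTheory.Kernel.id ×ₖ K) P,
    ProbabilityTheory.Kernel.measurable _, ?_⟩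
  filter_upwards [hae] with P hP
  rw [ProbabilityTheory.Kernel.prod_apply, ProbabilityTheory.Kernel.id_apply]
  have hKP : K P = Measure.pi fun p : Fin n × Fin m => P p.1 := by
    change κ P = _
    simp only [κ, Q, measure_univ, if_true]
  rw [Measure.dirac_prod, hKP]

lemma loss_meas {X : Type*} [MeasurableSpace X] (ℓ : Ysp → Ysp → ℝ) (f : X → Ysp)
    (hf : Measurable f) : Measurable fun z : X × Ysp => ℓ (f z.1) z.2 := by
  have h : Measurable fun q : Ysp × Ysp => ℓ q.1 q.2 := Measurable.of_discrete
  exact h.comp ((hf.comp measurable_fst).prodMk measurable_snd)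

lemma risk_meas {X : Type*} [MeasurableSpace X] (ℓ : Ysp → Ysp → ℝ)
    (hℓ : ∀ a b, ℓ a b ∈ Set.Icc (0 : ℝ) 1) (f : X → Ysp)
    (hf : Measurable f) : Measurable fun P : Measure (X × Ysp) => risk ℓ P f := by
  have hl := loss_meas ℓ f hf
  have : (fun P : Measure (X × Ysp) => risk ℓ P f) =
      fun P => (∫⁻ z, ENNReal.ofReal (ℓ (f z.1) z.2) ∂P).toReal := by
    ext P
    exact integral_eq_lintegral_of_nonneg_ae (Eventually.of_forall fun z => (hℓ _ _).1)
      hl.aestronglyMeasurable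
  rw [this]
  exact (Measure.measurable_lintegral hl.ennreal_ofReal).ennreal_toReal

lemma risk_nonneg {X : Type*} [MeasurableSpace X] (ℓ : Ysp → Ysp → ℝ)
    (hℓ : ∀ a b, ℓ a b ∈ Set.Icc (0 : ℝ) 1) (f : X → Ysp) (P : Measure (X × Ysp)) :
    0 ≤ risk ℓ P f := integral_nonneg fun _ => (hℓ _ _).1

lemma risk_le_one {X : Type*} [MeasurableSpace X] (ℓ : Ysp → Ysp → ℝ)
    (hℓ : ∀ a b, ℓ a b ∈ Set.Icc (0 : ℝ) 1) (f : X → Ysp) (hf : Measurable f)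
    (P : Measure (X × Ysp)) [IsProbabilityMeasure P] :
    risk ℓ P f ≤ 1 := by
  have hi : Integrable (fun z : X × Ysp => ℓ (f z.1) z.2) P :=
    integrable_of_bdd _ (loss_meas ℓ f hf) 1 fun z => by
      rw [abs_of_nonneg (hℓ _ _).1]; exact (hℓ _ _).2
  have := integral_mono hi (integrable_const 1) fun z => (hℓ _ _).2
  unfold risk
  simpa using this

lemma metaRisk_mem {X : Type*} [MeasurableSpace X] (ℓ : Ysp → Ysp → ℝ)
    (hℓ : ∀ a b, ℓ a b ∈ Set.Icc (0 : ℝ) 1) (f : X → Ysp) (hf : Measurable f)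
    (μ : Measure (Measure (X × Ysp))) [IsProbabilityMeasure μ]
    (hμ : ∀ᵐ P ∂μ, IsProbabilityMeasure P) :
    0 ≤ metaRisk ℓ μ f ∧ metaRisk ℓ μ f ≤ 1 := by
  refine ⟨integral_nonneg fun P => risk_nonneg ℓ hℓ f P, ?_⟩
  have := norm_integral_le_of_norm_le_const (μ := μ) (f := fun P => risk ℓ P f) (C := 1) (by
    filter_upwards [hμ] with P hP
    rw [Real.norm_eq_abs, abs_of_nonneg (risk_nonneg ℓ hℓ f P)]
    exact risk_le_one ℓ hℓ f hf P)
  simp only [probReal_univ, mul_one] at this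
  exact (le_abs_self _).trans this

/-- With confidence at least `1 - 2δ` over the draw of `n` domains i.i.d.
from the proxy meta-distribution `μ'` and `m` i.i.d. samples from each domain,
simultaneously for all `f ∈ F`:
`L^μ(f) ≤ L̂^{μ'}(f) + 2 R_{mn}(F) + 2 R_n(F) + 3 √(ln(2/δ)/(2mn)) + 3 √(ln(2/δ)/n) + ε`,
provided `D(μ, μ') ≤ ε`. -/
theorem statement0 {X : Type*} [MeasurableSpace X]
    (ℓ : Ysp → Ysp → ℝ) (hℓ01 : ∀ a b, ℓ a b ∈ Set.Icc (0 : ℝ) 1)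
    (hℓLip : LipschitzWith 1 fun p : Ysp × Ysp => ℓ p.1 p.2)
    (F : Set (X → Ysp)) (hFcount : F.Countable) (hFmeas : ∀ f ∈ F, Measurable f)
    (μ μ' : Measure (Measure (X × Ysp)))
    [IsProbabilityMeasure μ] [IsProbabilityMeasure μ']
    (hμprob : ∀ᵐ P ∂μ, IsProbabilityMeasure P)
    (hμ'prob : ∀ᵐ P ∂μ', IsProbabilityMeasure P)
    (n m : ℕ) (hn : 0 < n) (hm : 0 < m)
    (δ ε : ℝ) (hδ0 : 0 < δ) (hδ1 : δ < 1) (hε : 0 ≤ ε)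
    (hdist : (⨆ f ∈ F, |metaRisk ℓ μ' f - metaRisk ℓ μ f|) ≤ ε) :
    ENNReal.ofReal (1 - 2 * δ) ≤
      jointLaw n m μ' {ω | ∀ f ∈ F,
        metaRisk ℓ μ f ≤
          ((m : ℝ) * n)⁻¹ * ∑ p : Fin n × Fin m, ℓ (f (ω.2 p).1) (ω.2 p).2
            + 2 * rad ℓ F ω.2 + 2 * radDom ℓ F ω.1
            + 3 * Real.sqrt (Real.log (2 / δ) / (2 * m * n))
            + 3 * Real.sqrt (Real.log (2 / δ) / n) + ε} := by
  have hWne : Nonempty (X × Ysp) := by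
    obtain ⟨P, hP⟩ := hμ'prob.exists
    exact nonempty_of_isProbabilityMeasure P
  obtain ⟨hae, haem⟩ := joint_aem (W := X × Ysp) n m μ' hμ'prob
  have hinstn : Nonempty (Fin n) := ⟨⟨0, hn⟩⟩
  have hinstm : Nonempty (Fin m) := ⟨⟨0, hm⟩⟩
  have hn' : (0:ℝ) < n := by exact_mod_cast hn
  have hm' : (0:ℝ) < m := by exact_mod_cast hm
  have hcI : Countable F := hFcount.to_subtype
  set L := Real.log (2 / δ) with hLdef
  have hL : 0 ≤ L := Real.log_nonneg (by rw [le_div_iff₀ hδ0]; linarith)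
  have hexpL : exp (-L) = δ / 2 := by
    rw [hLdef, ← Real.log_inv, Real.exp_log (by positivity), inv_div]
  -- the two function families
  let u1 : F → Measure (X × Ysp) → ℝ := fun f P => min 1 (risk ℓ P f)
  let u2 : F → X × Ysp → ℝ := fun f z => ℓ (f.1 z.1) z.2
  have hu1 : ∀ f P, u1 f P ∈ Set.Icc (0:ℝ) 1 := fun f P =>
    ⟨le_min zero_le_one (risk_nonneg ℓ hℓ01 _ P), min_le_left _ _⟩
  have hu2 : ∀ f z, u2 f z ∈ Set.Icc (0:ℝ) 1 := fun f z => hℓ01 _ _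
  have hrm : ∀ f : F, Measurable fun P : Measure (X × Ysp) => risk ℓ P f.1 := fun f =>
    risk_meas ℓ hℓ01 f.1 (hFmeas _ f.2)
  have hm1 : ∀ f, Measurable (u1 f) := fun f => measurable_const.min (hrm f)
  have hm2 : ∀ f, Measurable (u2 f) := fun f => loss_meas ℓ f.1 (hFmeas _ f.2)
  have hu1risk : ∀ (f : F) (P : Measure (X × Ysp)), IsProbabilityMeasure P → u1 f P = risk ℓ P f.1 :=
    fun f P hP => min_eq_right (risk_le_one ℓ hℓ01 _ (hFmeas _ f.2) P)
  have he1 : ∀ f : F, ∫ P, u1 f P ∂μ' = metaRisk ℓ μ' f.1 := by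
    intro f
    apply integral_congr_ae
    filter_upwards [hμ'prob] with P hP using hu1risk f P hP
  let e1 : F → Fin n → ℝ := fun f _ => ∫ P, u1 f P ∂μ'
  have he1mem : ∀ f k, e1 f k ∈ Set.Icc (0:ℝ) 1 := by
    intro f k
    simp only [e1, he1]
    exact metaRisk_mem ℓ hℓ01 f.1 (hFmeas _ f.2) μ' hμ'prob
  let A1 : Set (Fin n → Measure (X × Ysp)) :=
    {P | aDev u1 e1 P - 2 * aRad u1 P < 3 * √(L / (2 * n))} ∩ {P | ∀ j, (P j) Set.univ = 1}
  have hA1m : MeasurableSet A1 := by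
    have hDm := aDev_meas u1 hm1 e1
    have hRm := aRad_meas (ι := Fin n) u1 hm1
    refine (measurableSet_lt (by fun_prop) measurable_const).inter ?_
    rw [Set.ofPred_forall]
    exact MeasurableSet.iInter fun j =>
      ((Measure.measurable_coe MeasurableSet.univ).comp (measurable_pi_apply j))
        (measurableSet_singleton 1)
  let T : Set ((Fin n → Measure (X × Ysp)) × ((Fin n × Fin m) → X × Ysp)) :=
    {ω | ω.1 ∈ A1} ∩ {ω | ∀ f : F, (n : ℝ)⁻¹ * ∑ j, risk ℓ (ω.1 j) f.1 ≤
      ((m : ℝ) * n)⁻¹ * ∑ p : Fin n × Fin m, u2 f (ω.2 p) + 2 * aRad u2 ω.2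
        + 3 * √(L / (2 * m * n))}
  have hTm : MeasurableSet T := by
    have hRm := aRad_meas (ι := Fin n × Fin m) u2 hm2
    refine (measurable_fst hA1m).inter ?_
    rw [Set.ofPred_forall]
    refine MeasurableSet.iInter fun f => ?_
    have h1 := hrm f
    have h2 := hm2 f
    refine measurableSet_le ?_ ?_
    · refine measurable_const.mul (Finset.measurable_sum _ fun j _ => ?_)
      exact h1.comp ((measurable_pi_apply j).comp measurable_fst)
    · fun_prop
  have hcardp : (Fintype.card (Fin n × Fin m) : ℝ) = m * n := by
    simp [mul_comm]
  -- inner probability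
  have hinner : ∀ P ∈ A1, F.Nonempty → ENNReal.ofReal (1 - δ / 2) ≤
      ((Measure.pi fun p : Fin n × Fin m => P p.1).map fun s => (P, s)) T := by
    intro P hP hFne
    have hFI : Nonempty F := hFne.to_subtype
    have hprob : ∀ j, IsProbabilityMeasure (P j) := fun j => ⟨hP.2 j⟩
    rw [Measure.map_apply measurable_prodMk_left hTm]
    have h := rad_tail' u2 hu2 (fun p : Fin n × Fin m => P p.1) hm2 L hL
    rw [hexpL] at h
    refine h.trans (measure_mono ?_)
    intro s hs
    refine ⟨hP, fun f => ?_⟩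
    have hs' : aDev u2 (fun (i : F) (k : Fin n × Fin m) => ∫ z, u2 i z ∂(P k.1)) s - 2 * aRad u2 s
      < 3 * √(L / (2 * Fintype.card (Fin n × Fin m))) := hs
    rw [hcardp, ← mul_assoc] at hs'
    have hle : ((m : ℝ) * n)⁻¹ * ∑ k : Fin n × Fin m, (risk ℓ (P k.1) f.1 - u2 f (s k)) ≤
        aDev u2 (fun (i : F) (k : Fin n × Fin m) => ∫ z, u2 i z ∂(P k.1)) s := by
      have := le_ciSup (bddAbove_of_abs fun i => avg_abs_le _ fun k =>
        termDev_abs u2 hu2 (fun (i : F) (k : Fin n × Fin m) => ∫ z, u2 i z ∂(P k.1))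
          (fun i k => ⟨risk_nonneg ℓ hℓ01 i.1 (P k.1),
            risk_le_one ℓ hℓ01 i.1 (hFmeas _ i.2) (P k.1)⟩) s i k) f
      unfold aDev
      rw [hcardp] at this ⊢
      exact this
    have hsum : ((m : ℝ) * n)⁻¹ * ∑ k : Fin n × Fin m, risk ℓ (P k.1) f.1 =
        (n : ℝ)⁻¹ * ∑ j, risk ℓ (P j) f.1 := by
      rw [Fintype.sum_prod_type]
      simp only [Finset.sum_const, Finset.card_univ, Fintype.card_fin, nsmul_eq_mul]
      rw [← Finset.mul_sum]
      field_simp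
    rw [Finset.sum_sub_distrib, mul_sub, hsum] at hle
    change _ ≤ ((m : ℝ) * n)⁻¹ * ∑ p : Fin n × Fin m, u2 f (s p) + 2 * aRad u2 s
        + 3 * √(L / (2 * m * n))
    linarith
  by_cases hFne : F.Nonempty
  swap
  · rw [Set.not_nonempty_iff_eq_empty] at hFne
    have huniv : jointLaw n m μ' Set.univ = 1 := by
      unfold jointLaw
      rw [Measure.bind_apply MeasurableSet.univ haem]
      have : ∀ᵐ P ∂(Measure.pi fun _ : Fin n => μ'),
          ((Measure.pi fun p : Fin n × Fin m => P p.1).map fun s => (P, s)) Set.univ = 1 := by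
        filter_upwards [hae] with P hP
        rw [Measure.map_apply measurable_prodMk_left MeasurableSet.univ]
        simp
      rw [lintegral_congr_ae this]
      simp
    simp only [hFne, Set.mem_empty_iff_false, false_imp_iff, implies_true]
    change _ ≤ jointLaw n m μ' Set.univ
    rw [huniv]
    exact ENNReal.ofReal_le_one.2 (by linarith)
  have hFI : Nonempty F := hFne.to_subtype
  have hA1 : ENNReal.ofReal (1 - δ / 2) ≤ (Measure.pi fun _ : Fin n => μ') A1 := by
    have h := rad_tail' u1 hu1 (fun _ : Fin n => μ') hm1 L hL
    rw [hexpL] at h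
    refine h.trans (measure_mono_ae ?_)
    filter_upwards [hae] with P hP hs
    refine ⟨?_, fun j => measure_univ⟩
    have hs' : aDev u1 e1 P - 2 * aRad u1 P < 3 * √(L / (2 * Fintype.card (Fin n))) := hs
    rw [Fintype.card_fin] at hs'
    exact hs'
  have hT : ENNReal.ofReal (1 - 2 * δ) ≤ jointLaw n m μ' T := by
    unfold jointLaw
    rw [Measure.bind_apply hTm haem]
    calc ENNReal.ofReal (1 - 2 * δ) ≤ ENNReal.ofReal ((1 - δ / 2) * (1 - δ / 2)) :=
          ENNReal.ofReal_le_ofReal (by nlinarith)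
      _ = ENNReal.ofReal (1 - δ / 2) * ENNReal.ofReal (1 - δ / 2) :=
          ENNReal.ofReal_mul (by linarith)
      _ ≤ ENNReal.ofReal (1 - δ / 2) * (Measure.pi fun _ : Fin n => μ') A1 := by gcongr
      _ = ∫⁻ _ in A1, ENNReal.ofReal (1 - δ / 2) ∂(Measure.pi fun _ : Fin n => μ') := by
          rw [setLIntegral_const]
      _ ≤ ∫⁻ P in A1, ((Measure.pi fun p : Fin n × Fin m => P p.1).map fun s => (P, s)) T
            ∂(Measure.pi fun _ : Fin n => μ') :=
          setLIntegral_mono' hA1m fun P hP => hinner P hP hFne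
      _ ≤ _ := setLIntegral_le_lintegral _ _
  refine hT.trans (measure_mono ?_)
  rintro ⟨P, s⟩ ⟨hPA, hPs⟩ f hf
  change P ∈ A1 at hPA
  have hprob : ∀ j, IsProbabilityMeasure (P j) := fun j => ⟨hPA.2 j⟩
  have hdev : aDev u1 e1 P - 2 * aRad u1 P < 3 * √(L / (2 * n)) := hPA.1
  have h2 : (n : ℝ)⁻¹ * ∑ j, risk ℓ (P j) f ≤
      ((m : ℝ) * n)⁻¹ * ∑ p : Fin n × Fin m, ℓ (f (s p).1) (s p).2 + 2 * aRad u2 s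
        + 3 * √(L / (2 * m * n)) := hPs ⟨f, hf⟩
  have hd : metaRisk ℓ μ f ≤ metaRisk ℓ μ' f + ε := by
    have hb := sup_le_bisup F (fun f => |metaRisk ℓ μ' f - metaRisk ℓ μ f|) (by
      intro g hg
      have a1 := metaRisk_mem ℓ hℓ01 g (hFmeas g hg) μ hμprob
      have a2 := metaRisk_mem ℓ hℓ01 g (hFmeas g hg) μ' hμ'prob
      rw [abs_abs, abs_le]
      constructor <;> linarith [a1.1, a1.2, a2.1, a2.2])
    have hc := le_ciSup (f := fun g : F => |metaRisk ℓ μ' g.1 - metaRisk ℓ μ g.1|) (by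
      refine bddAbove_of_abs fun g => ?_
      have a1 := metaRisk_mem ℓ hℓ01 g.1 (hFmeas g g.2) μ hμprob
      have a2 := metaRisk_mem ℓ hℓ01 g.1 (hFmeas g g.2) μ' hμ'prob
      rw [abs_abs, abs_le]
      constructor <;> linarith [a1.1, a1.2, a2.1, a2.2]) ⟨f, hf⟩
    have := (abs_le.1 ((hc.trans hb).trans hdist)).1
    simp only at this
    linarith
  have h1 : metaRisk ℓ μ' f - (n : ℝ)⁻¹ * ∑ j, risk ℓ (P j) f ≤ aDev u1 e1 P := by
    have := le_ciSup (bddAbove_of_abs fun i => avg_abs_le _ fun k =>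
        termDev_abs u1 hu1 e1 he1mem P i k) ⟨f, hf⟩
    refine le_trans (le_of_eq ?_) this
    simp only [e1, he1, hu1risk _ _ (hprob _), Finset.sum_sub_distrib, mul_sub]
    simp only [Finset.sum_const, Finset.card_univ, Fintype.card_fin, nsmul_eq_mul]
    field_simp
  have hr1 : aRad u1 P ≤ radDom ℓ F P := by
    unfold aRad radDom
    rw [Fintype.card_fin]
    apply div_le_div_of_nonneg_right _ (by positivity)
    apply Finset.sum_le_sum
    intro σ _
    have hb := sup_le_bisup F (fun f => (n : ℝ)⁻¹ * ∑ j, sgn (σ j) * risk ℓ (P j) f) (by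
      intro g hg
      have := avg_abs_le _ fun k => term_abs u1 hu1 σ P ⟨g, hg⟩ k
      simpa only [hu1risk _ _ (hprob _), Fintype.card_fin] using this)
    refine le_trans (le_of_eq ?_) hb
    unfold aT
    simp only [hu1risk _ _ (hprob _), Fintype.card_fin]
  have hr2 : aRad u2 s ≤ rad ℓ F s := by
    unfold aRad rad
    apply div_le_div_of_nonneg_right _ (by positivity)
    apply Finset.sum_le_sum
    intro σ _
    exact sup_le_bisup F (fun f => (Fintype.card (Fin n × Fin m) : ℝ)⁻¹ *
      ∑ k, sgn (σ k) * ℓ (f (s k).1) (s k).2) (by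
      intro g hg
      exact avg_abs_le _ fun k => term_abs u2 hu2 σ s ⟨g, hg⟩ k)
  have hsq : √(L / (2 * n)) ≤ √(L / n) := by
    apply Real.sqrt_le_sqrt
    apply div_le_div_of_nonneg_left hL hn'
    linarith
  change metaRisk ℓ μ f ≤ ((m : ℝ) * n)⁻¹ * ∑ p : Fin n × Fin m, ℓ (f (s p).1) (s p).2
            + 2 * rad ℓ F s + 2 * radDom ℓ F P
            + 3 * √(L / (2 * m * n)) + 3 * √(L / n) + ε
  linarith
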